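/- arXiv:1603.01986 — 5 statements merged into one kernel-verified Lean document; each statement's English description precedes it below -/
import Mathlib

section
/- For every natural number n and every real number s > -1, the Mellin transform of q_n on [0,1] satisfies ∫₀¹ q_n(x)·x^s dx = (-1)^n · (-s/2)_n / (s+1)_{n+1}, where (a)_m = a(a+1)⋯(a+m-1) denotes the Pochhammer symbol (rising factorial). -/
open MeasureTheory intervalIntegral

/-- The Pochhammer symbol (rising factorial) `(a)_m = a(a+1)⋯(a+m-1)` over `ℝ`. -/
noncomputable def poch (a : ℝ) (m : ℕ) : ℝ := (ascPochhammer ℝ m).eval a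

/-- The polynomial `p_n(x) = ∑_{k=0}^n (n choose k) ((k/2+1)_n / n!) (-1)^{n-k} x^k`. -/
noncomputable def pAlp (n : ℕ) (x : ℝ) : ℝ :=
  ∑ k ∈ Finset.range (n + 1),
    (n.choose k : ℝ) * (poch ((k : ℝ) / 2 + 1) n / (n.factorial : ℝ)) * (-1) ^ (n - k) * x ^ k
/-- The polynomial `q_n(x) = ∑_{k=0}^n (n choose k) (((k+1)/2)_n / n!) (-1)^{n-k} x^k`. -/
noncomputable def qAlp (n : ℕ) (x : ℝ) : ℝ :=
  ∑ k ∈ Finset.range (n + 1),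
    (n.choose k : ℝ) * (poch (((k : ℝ) + 1) / 2) n / (n.factorial : ℝ)) * (-1) ^ (n - k) * x ^ k

/-!
Up to the sign `(-1)^n`, the coefficient of `x^k` in `q_n` is `(-1)^k * n.choose k / n!` times the
value at `t = -k` of the polynomial `P(t) = ((1 - t)/2)_n`, and `(-1)^k * n.choose k / n!` is the
residue of `1 / (t)_{n+1}` at `t = -k`. As `∫₀¹ x^k x^s dx = 1 / (s + 1 + k)`, integrating
termwise therefore yields the partial fraction expansion of `P(t) / (t)_{n+1}` at `t = s + 1`,
which is valid because `deg P ≤ n`.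
-/

open Finset Polynomial
open scoped Nat

section PartialFractions

theorem eval_div_eval_nodal {F ι : Type*} [Field F] [DecidableEq ι] {s : Finset ι} {v : ι → F}
    {P : F[X]} {x : F} (hv : Set.InjOn v s) (hP : P.degree < #s) (hx : ∀ i ∈ s, x ≠ v i) :
    P.eval x / (Lagrange.nodal s v).eval x =
      ∑ i ∈ s, Lagrange.nodalWeight s v i * (x - v i)⁻¹ * P.eval (v i) := by
  rw [div_eq_iff (Lagrange.eval_nodal_not_at_node hx), mul_comm,
    ← Lagrange.eval_interpolate_not_at_node _ hx, ← Lagrange.eq_interpolate hv hP]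

theorem ascPochhammer_eq_nodal (R : Type*) [CommRing R] (n : ℕ) :
    ascPochhammer R n = Lagrange.nodal (range n) fun k ↦ -(k : R) := by
  induction n with
  | zero => simp
  | succ n ih => simp [ascPochhammer_succ_right, ih, Lagrange.nodal, prod_range_succ]

theorem prod_range_natCast_sub_self (R : Type*) [CommRing R] (k : ℕ) :
    ∏ j ∈ range k, ((j : R) - k) = (-1) ^ k * k ! := by
  induction k with
  | zero => simp
  | succ k ih =>
    rw [prod_range_succ', Nat.factorial_succ]
    push_cast
    simp only [add_sub_add_right_eq_sub, ih]
    ring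

theorem prod_range_erase_natCast_sub (R : Type*) [CommRing R] (k d : ℕ) :
    ∏ j ∈ (range (k + d + 1)).erase k, ((j : R) - k) = (-1) ^ k * k ! * d ! := by
  induction d with
  | zero =>
    rw [add_zero, range_add_one, erase_insert notMem_range_self, prod_range_natCast_sub_self]
    simp
  | succ d ih =>
    rw [← add_assoc, range_add_one, erase_insert_of_ne (by lia), prod_insert (by simp), ih,
      Nat.factorial_succ]
    push_cast
    ring

variable {F : Type*} [Field F] [CharZero F] {n : ℕ}

theorem nodalWeight_range_neg_natCast {k : ℕ} (hk : k ≤ n) :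
    Lagrange.nodalWeight (range (n + 1)) (fun j ↦ -(j : F)) k = (-1) ^ k * n.choose k / n ! := by
  obtain ⟨d, rfl⟩ := Nat.exists_eq_add_of_le hk
  have hfact : ((k + d)! : F) ≠ 0 := mod_cast (k + d).factorial_ne_zero
  simp only [Lagrange.nodalWeight, neg_sub_neg, prod_inv_distrib, prod_range_erase_natCast_sub,
    Nat.cast_add_choose]
  rw [mul_assoc, mul_inv, ← inv_pow, inv_neg_one]
  field_simp

theorem eval_div_eval_ascPochhammer_succ {P : F[X]} {x : F} (hP : P.natDegree ≤ n)
    (hx : ∀ k ≤ n, x + k ≠ 0) :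
    P.eval x / (ascPochhammer F (n + 1)).eval x =
      ∑ k ∈ range (n + 1), (-1) ^ k * n.choose k / n ! * (x + k)⁻¹ * P.eval (-(k : F)) := by
  have hinj : Set.InjOn (fun k : ℕ ↦ -(k : F)) (range (n + 1)) :=
    (neg_injective.comp Nat.cast_injective).injOn
  have hdeg : P.degree < #(range (n + 1)) := by
    rw [card_range]
    exact degree_le_natDegree.trans_lt (mod_cast Nat.lt_succ_of_le hP)
  have hnode : ∀ k ∈ range (n + 1), x ≠ -(k : F) := fun k hk ↦
    mt eq_neg_iff_add_eq_zero.mp (hx k (mem_range_succ_iff.mp hk))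
  rw [ascPochhammer_eq_nodal, eval_div_eval_nodal hinj hdeg hnode]
  refine sum_congr rfl fun k hk ↦ ?_
  rw [nodalWeight_range_neg_natCast (mem_range_succ_iff.mp hk), sub_neg_eq_add]

end PartialFractions

section Integral

variable {s : ℝ}

theorem integral_sum_pow_mul_rpow (t : Finset ℕ) (c : ℕ → ℝ) (hs : -1 < s) :
    ∫ x in (0 : ℝ)..1, (∑ k ∈ t, c k * x ^ k) * x ^ s = ∑ k ∈ t, c k * (s + 1 + k)⁻¹ := by
  have hexp (k : ℕ) : -1 < s + k := by linarith [k.cast_nonneg (α := ℝ)]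
  calc ∫ x in (0 : ℝ)..1, (∑ k ∈ t, c k * x ^ k) * x ^ s
      = ∫ x in (0 : ℝ)..1, ∑ k ∈ t, c k * x ^ (s + k) := by
        refine integral_congr_ae (.of_forall fun x hx ↦ ?_)
        rw [Set.uIoc_of_le zero_le_one] at hx
        simp only [Real.rpow_add_natCast hx.1.ne', sum_mul, mul_assoc, mul_comm (x ^ s)]
    _ = ∑ k ∈ t, c k * ∫ x in (0 : ℝ)..1, x ^ (s + k) := by
        simp only [integral_finsetSum fun k _ ↦ (intervalIntegrable_rpow' (hexp k)).const_mul (c k),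
          intervalIntegral.integral_const_mul]
    _ = ∑ k ∈ t, c k * (s + 1 + k)⁻¹ := by
        refine sum_congr rfl fun k _ ↦ ?_
        have hne : s + k + 1 ≠ 0 := by linarith [hexp k]
        rw [integral_rpow (.inl (hexp k)), Real.one_rpow, Real.zero_rpow hne, sub_zero, one_div,
          add_right_comm]

theorem integral_sum_choose_mul_eval_neg_mul_rpow {n : ℕ} {P : ℝ[X]} (hP : P.natDegree ≤ n)
    (hs : -1 < s) :
    ∫ x in (0 : ℝ)..1,
        (∑ k ∈ range (n + 1), (-1) ^ k * n.choose k / n ! * P.eval (-(k : ℝ)) * x ^ k) * x ^ s =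
      P.eval (s + 1) / (ascPochhammer ℝ (n + 1)).eval (s + 1) := by
  have hne : ∀ k ≤ n, s + 1 + (k : ℝ) ≠ 0 := fun k _ ↦ by linarith [k.cast_nonneg (α := ℝ)]
  rw [integral_sum_pow_mul_rpow _ _ hs, eval_div_eval_ascPochhammer_succ hP hne]
  exact sum_congr rfl fun k _ ↦ mul_right_comm _ _ _

end Integral

/-- The polynomial `t ↦ ((1 - t)/2)_n`, whose values at `t = -k` for `k ≤ n` are the
Pochhammer symbols in the coefficients of `q_n`. -/
noncomputable def qAlpInterpolant (n : ℕ) : ℝ[X] :=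
  (ascPochhammer ℝ n).comp (C (1 / 2) * (1 - X))

theorem eval_qAlpInterpolant (n : ℕ) (t : ℝ) :
    (qAlpInterpolant n).eval t = poch ((1 - t) / 2) n := by
  simp [qAlpInterpolant, poch, div_eq_inv_mul]

theorem natDegree_qAlpInterpolant_le (n : ℕ) : (qAlpInterpolant n).natDegree ≤ n := by
  have hlin : (C (1 / 2 : ℝ) * (1 - X)).natDegree ≤ 1 := by compute_degree
  calc (qAlpInterpolant n).natDegree
      = n * (C (1 / 2 : ℝ) * (1 - X)).natDegree := by
        rw [qAlpInterpolant, natDegree_comp, ascPochhammer_natDegree]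
    _ ≤ n * 1 := by gcongr
    _ = n := mul_one n

theorem qAlp_eq_sum_choose_mul_eval_neg (n : ℕ) (x : ℝ) :
    qAlp n x = (-1) ^ n *
      ∑ k ∈ range (n + 1),
        (-1) ^ k * n.choose k / n ! * (qAlpInterpolant n).eval (-(k : ℝ)) * x ^ k := by
  rw [qAlp, mul_sum]
  refine sum_congr rfl fun k hk ↦ ?_
  have hsign : (-1 : ℝ) ^ (n - k) = (-1) ^ n * (-1) ^ k := by
    rw [← pow_add, neg_one_pow_congr]
    have hkn : k ≤ n := mem_range_succ_iff.mp hk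
    grind
  rw [eval_qAlpInterpolant, hsign, sub_neg_eq_add, add_comm 1]
  ring

/-- Mellin transform of `q_n` on `[0,1]`:
`∫₀¹ q_n(x) x^s dx = (-1)^n (-s/2)_n / (s+1)_{n+1}` for `s > -1`. -/
theorem mellin_qAlp (n : ℕ) (s : ℝ) (hs : -1 < s) :
    ∫ x in (0 : ℝ)..1, qAlp n x * x ^ s =
      (-1) ^ n * poch (-s / 2) n / poch (s + 1) (n + 1) := by
  calc ∫ x in (0 : ℝ)..1, qAlp n x * x ^ s
      = (-1) ^ n *
          ((qAlpInterpolant n).eval (s + 1) / (ascPochhammer ℝ (n + 1)).eval (s + 1)) := by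
        simp only [qAlp_eq_sum_choose_mul_eval_neg, mul_assoc ((-1 : ℝ) ^ n),
          intervalIntegral.integral_const_mul]
        rw [integral_sum_choose_mul_eval_neg_mul_rpow (natDegree_qAlpInterpolant_le n) hs]
    _ = (-1) ^ n * poch (-s / 2) n / poch (s + 1) (n + 1) := by
        rw [eval_qAlpInterpolant, sub_add_cancel_right, ← poch, mul_div_assoc]
end

section
/- For every natural number n ≥ 1 and every integer j with 0 ≤ j ≤ n-1, the even moment ∫₀¹ q_n(x)·x^{2j} dx = 0. In other words, all even moments of q_n on [0,1] of order at most 2n-2 vanish. -/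
open MeasureTheory intervalIntegral

/-!
Write `q_n(x) = ∑ k, (-1)^(n-k) (n choose k) P(k) x^k`, where `P(t) = ((t+1)/2)_n / n!` is a
polynomial of degree `n` in `t` with roots `-1, -3, …, -(2n-1)`. Integrating termwise, the moment of
order `m` is the `n`-th forward difference at `0` of `P(t) / (t + m + 1)`. For `m = 2j < 2n` the
denominator cancels against a root of `P`, leaving a polynomial of degree less than `n`, whose
`n`-th difference vanishes.
-/

open Finset Polynomial

lemma alternating_sum_choose_mul_eval_eq_zero {R : Type*} [CommRing R] {P : R[X]} {n : ℕ}
    (hP : P.degree < n) :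
    ∑ k ∈ range (n + 1), (n.choose k : R) * (-1) ^ (n - k) * P.eval (k : R) = 0 := by
  rcases eq_or_ne P 0 with rfl | hP0
  · simp
  have hdiff := congrFun
    (fwdDiff_iter_eq_zero_of_degree_lt ((natDegree_lt_iff_degree_lt hP0).2 hP)) 0
  rw [fwdDiff_iter_eq_sum_shift] at hdiff
  simpa [mul_comm] using hdiff

lemma alternating_sum_choose_mul_eval_div_sub_eq_zero {K : Type*} [Field K] {P : K[X]} {n : ℕ}
    {a : K} (hP : P.degree ≤ n) (hroot : P.IsRoot a) (ha : ∀ k ≤ n, (k : K) ≠ a) :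
    ∑ k ∈ range (n + 1), (n.choose k : K) * (-1) ^ (n - k) * (P.eval (k : K) / (k - a)) = 0 := by
  rcases eq_or_ne P 0 with rfl | hP0
  · simp
  obtain ⟨Q, rfl⟩ := dvd_iff_isRoot.2 hroot
  have hQ : Q.degree < n := by
    rw [degree_mul, degree_X_sub_C, degree_eq_natDegree (right_ne_zero_of_mul hP0)] at hP
    rw [degree_eq_natDegree (right_ne_zero_of_mul hP0)]
    norm_cast at hP ⊢
    omega
  rw [← alternating_sum_choose_mul_eval_eq_zero hQ]
  refine sum_congr rfl fun k hk ↦ ?_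
  have hk' : (k : K) - a ≠ 0 := sub_ne_zero.2 (ha k (mem_range_succ_iff.1 hk))
  rw [eval_mul, eval_sub, eval_X, eval_C, mul_div_cancel_left₀ _ hk']

lemma integral_sum_mul_pow_mul_pow (s : Finset ℕ) (c : ℕ → ℝ) (m : ℕ) :
    ∫ x in (0 : ℝ)..1, (∑ k ∈ s, c k * x ^ k) * x ^ m = ∑ k ∈ s, c k / (k + m + 1) := by
  simp only [sum_mul, mul_assoc, ← pow_add]
  rw [integral_finsetSum fun k _ ↦ Continuous.intervalIntegrable (by fun_prop) _ _]
  simp [div_eq_mul_inv]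

lemma integral_alternating_sum_choose_mul_eval_mul_pow_eq_zero {P : ℝ[X]} {n m : ℕ}
    (hP : P.degree ≤ n) (hroot : P.IsRoot (-(m + 1))) :
    ∫ x in (0 : ℝ)..1,
      (∑ k ∈ range (n + 1), (n.choose k : ℝ) * P.eval (k : ℝ) * (-1) ^ (n - k) * x ^ k) * x ^ m
        = 0 := by
  have hpole : ∀ k ≤ n, (k : ℝ) ≠ -(m + 1) := fun k _ ↦ by
    have : (0 : ℝ) < k + (m + 1) := by positivity
    linarith
  rw [integral_sum_mul_pow_mul_pow,
    ← alternating_sum_choose_mul_eval_div_sub_eq_zero hP hroot hpole]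
  refine sum_congr rfl fun k _ ↦ ?_
  ring

/-- The polynomial `((X + 1) / 2)_n / n!`, whose value at `k` is the factor
`((k + 1) / 2)_n / n!` in the coefficient of `x ^ k` in `q_n`. -/
noncomputable def qCoeffPoly (n : ℕ) : ℝ[X] :=
  C (n.factorial : ℝ)⁻¹ * (ascPochhammer ℝ n).comp (C 2⁻¹ * X + C 2⁻¹)

lemma eval_qCoeffPoly (n : ℕ) (t : ℝ) :
    (qCoeffPoly n).eval t = poch ((t + 1) / 2) n / n.factorial := by
  have hlin : 2⁻¹ * t + 2⁻¹ = (t + 1) / 2 := by ring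
  simp [qCoeffPoly, poch, hlin, div_eq_inv_mul]

lemma degree_qCoeffPoly_le (n : ℕ) : (qCoeffPoly n).degree ≤ n := by
  refine degree_le_of_natDegree_le ((natDegree_C_mul_le _ _).trans (natDegree_comp_le.trans ?_))
  rw [ascPochhammer_natDegree]
  exact mul_le_of_le_one_right' natDegree_linear_le

lemma isRoot_qCoeffPoly {n j : ℕ} (hj : j < n) : (qCoeffPoly n).IsRoot (-(2 * j + 1)) := by
  have harg : (-(2 * j + 1) + 1 : ℝ) / 2 = -j := by ring
  rw [IsRoot, eval_qCoeffPoly, harg, poch, ascPochhammer_eval_neg_coe_nat_of_lt hj, zero_div]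

/-- All even moments of `q_n` on `[0,1]` of order at most `2n-2` vanish. -/
theorem qAlp_even_moments (n : ℕ) (hn : 1 ≤ n) (j : ℕ) (hj : j ≤ n - 1) :
    ∫ x in (0 : ℝ)..1, qAlp n x * x ^ (2 * j) = 0 := by
  have hroot : (qCoeffPoly n).IsRoot (-((2 * j : ℕ) + 1)) := by
    simpa using isRoot_qCoeffPoly (show j < n by omega)
  simpa only [qAlp, eval_qCoeffPoly] using
    integral_alternating_sum_choose_mul_eval_mul_pow_eq_zero (degree_qCoeffPoly_le n) hroot
end

section
/- Rodrigues-type formula for q_n: for every natural number n and every real x > 0, q_n(x) = ((-1)^n / (2^n · n!)) · x · (D*)^n [x^{2n-1}(1-x)^n](x), where D* is the operator (D*f)(x) = f'(x)/x and (D*)^n denotes its n-fold iteration applied to the function x ↦ x^{2n-1}(1-x)^n on (0,∞). -/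
open MeasureTheory intervalIntegral

/-- The differential operator `D* f = f' / x`. -/
noncomputable def Dstar (f : ℝ → ℝ) : ℝ → ℝ := fun x => deriv f x / x

/-!
`D*` sends `y ^ a` to `a y ^ (a - 2)`, so `(D*)^m` sends it to
`a (a - 2) ⋯ (a - 2m + 2) y ^ (a - 2m)`, whose coefficient read backwards is
`2 ^ m (a / 2 - m + 1)_m`. Expand `y ^ (2n - 1) (1 - y) ^ n` by the binomial theorem: for the term
with `a = 2n - 1 + k` and `m = n`, the Pochhammer parameter is `(k + 1) / 2`, as in the `k`-th
coefficient of `q_n`.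
-/

lemma poch_succ_left (a : ℝ) (m : ℕ) : poch a (m + 1) = a * poch (a + 1) m := by
  simp [poch, ascPochhammer_succ_left, Polynomial.eval_comp]

section Dstar

variable {ι : Type*} {U : Set ℝ} {f g : ℝ → ℝ} {x : ℝ}

lemma eqOn_Dstar (hU : IsOpen U) (hfg : Set.EqOn f g U) : Set.EqOn (Dstar f) (Dstar g) U :=
  fun x hx => congrArg (· / x) (hfg.deriv hU hx)

lemma eqOn_iterate_Dstar (hU : IsOpen U) (hfg : Set.EqOn f g U) (m : ℕ) :
    Set.EqOn (Dstar^[m] f) (Dstar^[m] g) U := by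
  induction m with
  | zero => exact hfg
  | succ m ih =>
    simp only [Function.iterate_succ_apply']
    exact eqOn_Dstar hU ih

lemma Dstar_sum_rpow (s : Finset ι) (c a : ι → ℝ) (hx : x ≠ 0) :
    Dstar (fun y => ∑ k ∈ s, c k * y ^ a k) x = ∑ k ∈ s, c k * a k * x ^ (a k - 2) := by
  have hderiv : HasDerivAt (fun y => ∑ k ∈ s, c k * y ^ a k)
      (∑ k ∈ s, c k * (a k * x ^ (a k - 1))) x :=
    .fun_sum fun k _ => (Real.hasDerivAt_rpow_const (.inl hx)).const_mul (c k)
  have hrpow (k : ι) : x ^ (a k - 2) = x ^ (a k - 1) / x := by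
    rw [← Real.rpow_sub_one hx]
    ring_nf
  rw [Dstar, hderiv.deriv, Finset.sum_div]
  refine Finset.sum_congr rfl fun k _ => ?_
  rw [hrpow]
  ring

lemma iterate_Dstar_sum_rpow (s : Finset ι) (c a : ι → ℝ) (m : ℕ) (hx : x ≠ 0) :
    Dstar^[m] (fun y => ∑ k ∈ s, c k * y ^ a k) x =
      ∑ k ∈ s, c k * (2 ^ m * poch (a k / 2 - m + 1) m) * x ^ (a k - 2 * m) := by
  induction m generalizing x with
  | zero => simp [poch]
  | succ m ih =>
    have hiterate : Set.EqOn (Dstar^[m] fun y => ∑ k ∈ s, c k * y ^ a k)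
        (fun y => ∑ k ∈ s, c k * (2 ^ m * poch (a k / 2 - m + 1) m) * y ^ (a k - 2 * m)) {0}ᶜ :=
      fun y hy => ih hy
    rw [Function.iterate_succ_apply', eqOn_Dstar isOpen_compl_singleton hiterate hx,
      Dstar_sum_rpow s _ _ hx]
    refine Finset.sum_congr rfl fun k _ => ?_
    have hpoch : poch (a k / 2 - (m + 1 : ℕ) + 1) (m + 1) =
        (a k / 2 - m) * poch (a k / 2 - m + 1) m := by
      rw [poch_succ_left]
      push_cast
      ring_nf
    have hexponent : a k - 2 * (m + 1 : ℕ) = a k - 2 * m - 2 := by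
      push_cast
      ring
    rw [hpoch, hexponent]
    ring

lemma rpow_mul_one_sub_pow (p : ℝ) (n : ℕ) (hx : x ≠ 0) :
    x ^ p * (1 - x) ^ n =
      ∑ k ∈ Finset.range (n + 1), (-1) ^ k * (n.choose k : ℝ) * x ^ (p + k) := by
  rw [sub_eq_neg_add, add_pow, Finset.mul_sum]
  refine Finset.sum_congr rfl fun k _ => ?_
  rw [Real.rpow_add_natCast hx, neg_pow, one_pow]
  ring

lemma iterate_Dstar_rpow_mul_one_sub_pow (p : ℝ) (n m : ℕ) (hx : x ≠ 0) :
    Dstar^[m] (fun y => y ^ p * (1 - y) ^ n) x =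
      ∑ k ∈ Finset.range (n + 1), (-1) ^ k * (n.choose k : ℝ) *
        (2 ^ m * poch ((p + k) / 2 - m + 1) m) * x ^ (p + k - 2 * m) := by
  rw [eqOn_iterate_Dstar isOpen_compl_singleton (fun y hy => rpow_mul_one_sub_pow p n hy) m hx]
  exact iterate_Dstar_sum_rpow _ _ _ m hx

end Dstar

/-- At a negative base, `y ^ (2 * (n : ℝ) - 1)` is the genuine integer power, since the real
exponent is an integer. -/
theorem rodrigues_qAlp_general (n : ℕ) {x : ℝ} (hx : x ≠ 0) :
    qAlp n x = ((-1) ^ n / (2 ^ n * (n.factorial : ℝ))) * x *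
      (Dstar^[n] (fun y : ℝ => y ^ (2 * (n : ℝ) - 1) * (1 - y) ^ n)) x := by
  rw [iterate_Dstar_rpow_mul_one_sub_pow _ n n hx, qAlp, Finset.mul_sum]
  refine Finset.sum_congr rfl fun k hk => ?_
  have hkn : k ≤ n := Finset.mem_range_succ_iff.mp hk
  have hpoch : (2 * (n : ℝ) - 1 + k) / 2 - n + 1 = (k + 1) / 2 := by ring
  have hpow : x * x ^ (2 * (n : ℝ) - 1 + k - 2 * n) = x ^ k := by
    rw [show 2 * (n : ℝ) - 1 + k - 2 * n = k - 1 by ring, Real.rpow_sub_one hx,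
      Real.rpow_natCast, mul_div_cancel₀ _ hx]
  have hsign : (-1 : ℝ) ^ (n - k) = (-1) ^ n * (-1) ^ k := by
    rw [← pow_sub_mul_pow (-1 : ℝ) hkn, mul_assoc, ← mul_pow]
    simp
  rw [hpoch, ← hpow, hsign]
  field_simp

/-- Rodrigues-type formula: `q_n(x) = ((-1)^n / (2^n n!)) x (D*)^n [x^{2n-1}(1-x)^n](x)`
for `x > 0`, where `x^{2n-1}` is the real power `x ↦ x^(2n-1)` on `(0,∞)`. -/
theorem rodrigues_qAlp (n : ℕ) (x : ℝ) (hx : 0 < x) :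
    qAlp n x = ((-1) ^ n / (2 ^ n * (n.factorial : ℝ))) * x *
      (Dstar^[n] (fun y : ℝ => y ^ (2 * (n : ℝ) - 1) * (1 - y) ^ n)) x :=
  rodrigues_qAlp_general n hx.ne'
end

section
/- For every natural number n ≥ 1 and every real x, one has (3n+1)·q_n(x) = (n+1)·r_n(x) + n·r_{n-1}(x) as an identity of polynomials. -/
open MeasureTheory intervalIntegral

/-- The polynomial `r_n(x) = ∑_{k=0}^n (n choose k) (((k+3)/2)_n / n!) (-1)^{n-k} x^k`. -/
noncomputable def rAlp (n : ℕ) (x : ℝ) : ℝ :=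
  ∑ k ∈ Finset.range (n + 1),
    (n.choose k : ℝ) * (poch (((k : ℝ) + 3) / 2) n / (n.factorial : ℝ)) * (-1) ^ (n - k) * x ^ k

/-- The family `P_n(x) = ∑_{k=0}^n (n choose k) ((c k + s)_n / n!) (-1)^{n-k} x^k` that contains
`p_n`, `q_n` and `r_n` as the cases `c = 1/2` and `s = 1, 1/2, 3/2`. The quotient `(a)_n / n!` is
encoded as `Ring.multichoose a n`, which makes sense in every binomial ring. -/
def altMultichooseSum {R : Type*} [CommRing R] [BinomialRing R] (c s : R) (n : ℕ) (x : R) : R :=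
  ∑ k ∈ Finset.range (n + 1),
    (n.choose k : R) * Ring.multichoose (c * k + s) n * (-1) ^ (n - k) * x ^ k

theorem succ_mul_multichoose_succ {R : Type*} [Semiring R] [BinomialRing R] (r : R) (n : ℕ) :
    ((n : R) + 1) * Ring.multichoose r (n + 1) = r * Ring.multichoose (r + 1) n := by
  have : IsAddTorsionFree R := BinomialRing.toIsAddTorsionFree
  apply nsmul_right_injective n.factorial_ne_zero
  calc n.factorial • (((n : R) + 1) * Ring.multichoose r (n + 1))
      = (n + 1).factorial • Ring.multichoose r (n + 1) := by
        rw [Nat.factorial_succ, mul_comm, mul_nsmul, ← Nat.cast_succ, ← nsmul_eq_mul,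
          smul_comm]
    _ = r * (n.factorial • Ring.multichoose (r + 1) n) := by
        simp only [Ring.factorial_nsmul_multichoose_eq_ascPochhammer, ascPochhammer_succ_left,
          Polynomial.smeval_X_mul, Polynomial.smeval_comp, Polynomial.smeval_add,
          Polynomial.smeval_X, Polynomial.smeval_one, pow_zero, pow_one, one_smul]
    _ = n.factorial • (r * Ring.multichoose (r + 1) n) := mul_smul_comm _ _ _

section ChooseRecurrences

variable {R : Type*} [Ring R]

theorem cast_choose_mul_succ_eq (n k : ℕ) :
    (n.choose k : R) * (n + 1) = ((n + 1).choose k : R) * (n + 1 - k) := by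
  rcases le_or_gt k (n + 1) with hk | hk
  · have h := congrArg (Nat.cast (R := R)) (Nat.choose_mul_succ_eq n k)
    push_cast [Nat.cast_sub hk] at h
    exact h
  · rw [Nat.choose_eq_zero_of_lt hk, Nat.choose_eq_zero_of_lt (Nat.lt_of_succ_lt hk)]
    simp

theorem cast_choose_mul_neg_one_pow_succ_sub (n k : ℕ) :
    (n.choose k : R) * (-1) ^ (n + 1 - k) = -((n.choose k : R) * (-1) ^ (n - k)) := by
  rcases le_or_gt k n with hk | hk
  · rw [Nat.succ_sub hk, pow_succ, mul_neg_one, mul_neg]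
  · simp [Nat.choose_eq_zero_of_lt hk]

end ChooseRecurrences

section MultichooseRecurrences

variable {R : Type*} [CommRing R] [BinomialRing R]

theorem altMultichooseSum_eq_sum_range_add_two (c s : R) (n : ℕ) (x : R) :
    altMultichooseSum c s n x = ∑ k ∈ Finset.range (n + 2),
      (n.choose k : R) * Ring.multichoose (c * k + s) n * (-1) ^ (n - k) * x ^ k := by
  simp [altMultichooseSum, Finset.sum_range_succ _ (n + 1)]

theorem multichoose_linear_recurrence (c s t : R) (n : ℕ) :
    ((c + 1) * (n + 1) + s) * Ring.multichoose (c * t + s) (n + 1) =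
      (c * (n + 1) + s) * Ring.multichoose (c * t + (s + 1)) (n + 1) -
        c * (n + 1 - t) * Ring.multichoose (c * t + (s + 1)) n := by
  have pascal := Ring.multichoose_succ_succ (c * t + s) n
  have absorption := succ_mul_multichoose_succ (c * t + s) n
  rw [← add_assoc]
  -- The weights are chosen so that, after Pascal's rule, the coefficient of the lower term is
  -- `(c * (n + 1) + s) - c * (n + 1 - t) = c * t + s`, as absorption requires.
  linear_combination absorption - (c * (n + 1) + s) * pascal

theorem rec_qAlp_rAlp_general (c s : R) (n : ℕ) (x : R) :
    ((c + 1) * (n + 1) + s) * altMultichooseSum c s (n + 1) x =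
      (c * (n + 1) + s) * altMultichooseSum c (s + 1) (n + 1) x +
        c * (n + 1) * altMultichooseSum c (s + 1) n x := by
  rw [altMultichooseSum_eq_sum_range_add_two c (s + 1) n, altMultichooseSum, altMultichooseSum]
  simp only [Finset.mul_sum, ← Finset.sum_add_distrib]
  refine Finset.sum_congr rfl fun k _ ↦ ?_
  have coeff := multichoose_linear_recurrence c s (k : R) n
  have choose_eq := cast_choose_mul_succ_eq (R := R) n k
  have sign_eq := cast_choose_mul_neg_one_pow_succ_sub (R := R) n k
  linear_combination
    ((n + 1).choose k : R) * (-1) ^ (n + 1 - k) * x ^ k * coeff +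
      c * Ring.multichoose (c * k + (s + 1)) n * x ^ k *
        ((-1) ^ (n + 1 - k) * choose_eq - (n + 1) * sign_eq)

end MultichooseRecurrences

theorem poch_div_factorial (a : ℝ) (n : ℕ) : poch a n / n.factorial = Ring.multichoose a n := by
  rw [div_eq_iff (Nat.cast_ne_zero.mpr n.factorial_ne_zero), mul_comm, ← nsmul_eq_mul,
    Ring.factorial_nsmul_multichoose_eq_ascPochhammer, Polynomial.ascPochhammer_smeval_eq_eval,
    poch]

theorem qAlp_eq_altMultichooseSum (n : ℕ) (x : ℝ) :
    qAlp n x = altMultichooseSum (1 / 2) (1 / 2) n x := by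
  have parameter_eq (k : ℝ) : (k + 1) / 2 = 1 / 2 * k + 1 / 2 := by ring
  simp only [qAlp, altMultichooseSum, poch_div_factorial, parameter_eq]

theorem rAlp_eq_altMultichooseSum (n : ℕ) (x : ℝ) :
    rAlp n x = altMultichooseSum (1 / 2) (1 / 2 + 1) n x := by
  have parameter_eq (k : ℝ) : (k + 3) / 2 = 1 / 2 * k + (1 / 2 + 1) := by ring
  simp only [rAlp, altMultichooseSum, poch_div_factorial, parameter_eq]

/-- `(3n+1) q_n(x) = (n+1) r_n(x) + n r_{n-1}(x)` for `n ≥ 1`. -/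
theorem rec_qAlp_rAlp (n : ℕ) (hn : 1 ≤ n) (x : ℝ) :
    (3 * (n : ℝ) + 1) * qAlp n x = ((n : ℝ) + 1) * rAlp n x + (n : ℝ) * rAlp (n - 1) x := by
  obtain ⟨m, rfl⟩ := Nat.exists_eq_add_of_le' hn
  rw [Nat.add_sub_cancel, qAlp_eq_altMultichooseSum, rAlp_eq_altMultichooseSum,
    rAlp_eq_altMultichooseSum, Nat.cast_succ]
  linear_combination 2 * rec_qAlp_rAlp_general (1 / 2) (1 / 2) m x
end

section
/- Gram matrix entries for the polynomials p_n: for all natural numbers k ≤ n, ∫₀¹ p_n(x)·p_k(x) dx = (-1)^{n+k} · ((1/2)_n / (n+1)!) · ∑_{j=0}^{⌊k/2⌋} [ (k+1)_j · (-k/2)_j · (-(k-1)/2)_j · (1/2)_j ] / [ (-n+1/2)_j · ((n+2)/2)_j · ((n+3)/2)_j · j! ], a terminating hypergeometric (₄F₃-type) sum. -/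
open MeasureTheory intervalIntegral

/-!
Pairing `p_n` with `x ^ m` gives `∑ i, (-1)^(n-i) (n choose i) q(i) / (m + 1 + i)` up to `n!`, where
`q(t) = (t/2 + 1)_n` is a polynomial of degree `n`. Lagrange interpolation of `q` at `0, …, n`,
evaluated at `-(m + 1)`, sums this in closed form, so the moment is a multiple of `((1 - m)/2)_n`.
For odd `m < 2n` this Pochhammer symbol contains the factor `0`; hence only the even monomials of
`p_k` contribute, and the duplication formula for `(a)_{2j}` turns their contributions into the
terms of the hypergeometric sum.
-/

section EquispacedInterpolation

open Polynomial

lemma prod_erase_range_natCast_sub {R : Type*} [CommRing R] (i d : ℕ) :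
    ∏ j ∈ (Finset.range (i + d + 1)).erase i, ((i : R) - j) =
      (-1) ^ d * (i.factorial * d.factorial) := by
  induction d with
  | zero =>
    rw [add_zero, Finset.range_add_one, Finset.erase_insert Finset.notMem_range_self,
      ← descPochhammer_eval_eq_prod_range, descPochhammer_eval_eq_descFactorial,
      Nat.descFactorial_self]
    simp
  | succ d ih =>
    have erase_succ : (Finset.range (i + (d + 1) + 1)).erase i =
        insert (i + d + 1) ((Finset.range (i + d + 1)).erase i) := by
      rw [Finset.range_add_one, Finset.erase_insert_of_ne (by omega), ← add_assoc]
    rw [erase_succ, Finset.prod_insert (by simp), ih, Nat.factorial_succ]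
    push_cast
    ring

variable {K : Type*} [Field K]

lemma nodalWeight_range_natCast {n i : ℕ} (hi : i ≤ n) :
    Lagrange.nodalWeight (Finset.range (n + 1)) (Nat.cast : ℕ → K) i =
      (-1) ^ (n - i) / (i.factorial * (n - i).factorial) := by
  obtain ⟨d, rfl⟩ := Nat.exists_eq_add_of_le hi
  rw [Lagrange.nodalWeight, Finset.prod_inv_distrib, prod_erase_range_natCast_sub,
    Nat.add_sub_cancel_left, mul_inv, ← inv_pow, inv_neg_one, div_eq_mul_inv]

lemma eval_neg_nodal_range_natCast (n : ℕ) (a : K) :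
    (Lagrange.nodal (Finset.range n) (Nat.cast : ℕ → K)).eval (-a) =
      (-1) ^ n * (ascPochhammer K n).eval a := by
  rw [Lagrange.eval_nodal, ← descPochhammer_eval_eq_prod_range, ← neg_neg a,
    ascPochhammer_eval_neg_eq_descPochhammer, neg_neg, ← mul_assoc, ← mul_pow]
  simp

lemma factorial_mul_eval_neg_eq_sum_range [CharZero K] {n : ℕ} {q : K[X]}
    (hq : q.natDegree ≤ n) {a : K} (ha : ∀ i ≤ n, a + i ≠ 0) :
    n.factorial * q.eval (-a) = (-1) ^ n * (ascPochhammer K (n + 1)).eval a *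
      ∑ i ∈ Finset.range (n + 1),
        (-1) ^ (n - i) * (n.choose i : K) * (q.eval (i : K) / (a + i)) := by
  have degree_lt : q.degree < (Finset.range (n + 1)).card := by
    simpa using degree_le_natDegree.trans_lt (by exact_mod_cast Nat.lt_succ_of_le hq)
  have not_at_node : ∀ i ∈ Finset.range (n + 1), -a ≠ (i : K) := fun i hi h =>
    ha i (Finset.mem_range_succ_iff.1 hi) (by rw [← h, add_neg_cancel])
  conv_lhs => rw [Lagrange.eq_interpolate (Nat.cast_injective (R := K)).injOn degree_lt]
  rw [Lagrange.eval_interpolate_not_at_node _ not_at_node, eval_neg_nodal_range_natCast,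
    Finset.mul_sum, Finset.mul_sum, Finset.mul_sum]
  refine Finset.sum_congr rfl fun i hi => ?_
  have i_le := Finset.mem_range_succ_iff.1 hi
  rw [nodalWeight_range_natCast i_le, Nat.cast_choose K i_le, ← neg_add', inv_neg]
  ring

lemma sum_alternating_choose_mul_eval_div [CharZero K] {n : ℕ} {q : K[X]}
    (hq : q.natDegree ≤ n) {a : K} (ha : ∀ i ≤ n, a + i ≠ 0) :
    ∑ i ∈ Finset.range (n + 1), (-1) ^ (n - i) * (n.choose i : K) * (q.eval (i : K) / (a + i)) =
      (-1) ^ n * n.factorial * q.eval (-a) / (ascPochhammer K (n + 1)).eval a := by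
  have ascPochhammer_ne_zero : (ascPochhammer K (n + 1)).eval a ≠ 0 := by
    rw [Ne, ascPochhammer_eval_eq_zero_iff]
    rintro ⟨i, hi, h⟩
    exact ha i (Nat.lt_succ_iff.1 hi) (by rw [h, add_neg_cancel])
  have sign_sq : (-1 : K) ^ n * (-1) ^ n = 1 := by rw [← mul_pow]; simp
  rw [mul_assoc, factorial_mul_eval_neg_eq_sum_range hq ha, ← mul_assoc, ← mul_assoc, sign_sq,
    one_mul, mul_div_cancel_left₀ _ ascPochhammer_ne_zero]

end EquispacedInterpolation

section Pochhammer

lemma poch_zero (a : ℝ) : poch a 0 = 1 := by simp [poch]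

lemma poch_succ (a : ℝ) (m : ℕ) : poch a (m + 1) = poch a m * (a + m) :=
  ascPochhammer_succ_eval m a

lemma mul_poch_add_one (a : ℝ) (m : ℕ) : a * poch (a + 1) m = poch a m * (a + m) := by
  rw [← poch_succ]
  simp [poch, ascPochhammer_succ_left]

lemma poch_pos {a : ℝ} (ha : 0 < a) (m : ℕ) : 0 < poch a m := ascPochhammer_pos m a ha

lemma poch_two_mul (a : ℝ) (m : ℕ) :
    poch a (2 * m) = 4 ^ m * poch (a / 2) m * poch ((a + 1) / 2) m := by
  induction m with
  | zero => simp [poch_zero]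
  | succ m ih =>
    rw [mul_add_one, poch_succ, poch_succ, ih, poch_succ, poch_succ]
    push_cast
    ring

lemma poch_sub_natCast_mul_poch (a : ℝ) (m j : ℕ) :
    poch (a - j) m * poch (1 - a - m) j = poch a m * poch (1 - a) j := by
  induction j with
  | zero => simp [poch_zero]
  | succ j ih =>
    have shift := mul_poch_add_one (a - (j + 1)) m
    rw [show a - ((j : ℝ) + 1) + 1 = a - j by ring] at shift
    simp only [poch_succ, Nat.cast_succ]
    linear_combination (1 - a + j) * ih + poch (1 - a - m) j * shift

lemma factorial_mul_poch_comm (i j : ℕ) :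
    (i.factorial : ℝ) * poch (i + 1) j = j.factorial * poch (j + 1) i := by
  have factorial_mul_poch (r s : ℕ) : (r.factorial : ℝ) * poch (r + 1) s = (r + s).factorial := by
    simpa [poch] using factorial_mul_ascPochhammer ℝ r s
  rw [factorial_mul_poch, factorial_mul_poch, add_comm]

lemma poch_neg_natCast (k m : ℕ) :
    poch (-(k : ℝ)) m = (-1) ^ m * (m.factorial * k.choose m) := by
  rw [poch, ascPochhammer_eval_neg_eq_descPochhammer, descPochhammer_eval_eq_descFactorial,
    Nat.descFactorial_eq_factorial_mul_choose, Nat.cast_mul]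

end Pochhammer

lemma sum_range_succ_eq_sum_even {M : Type*} [AddCommMonoid M] {k : ℕ} {f : ℕ → M}
    (hf : ∀ j, 2 * j + 1 ≤ k → f (2 * j + 1) = 0) :
    ∑ m ∈ Finset.range (k + 1), f m = ∑ j ∈ Finset.range (k / 2 + 1), f (2 * j) := by
  refine (Finset.sum_of_injOn (2 * ·) (by simp [Set.InjOn]) ?_ ?_ fun _ _ => rfl).symm
  · intro j hj
    simp only [Finset.coe_range, Set.mem_Iio] at hj ⊢
    omega
  · intro m hm hm_image
    obtain ⟨j, rfl | rfl⟩ := Nat.even_or_odd' m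
    · refine absurd ⟨j, ?_, rfl⟩ hm_image
      simp only [Finset.mem_range, Finset.coe_range, Set.mem_Iio] at hm ⊢
      omega
    · exact hf j (Nat.lt_succ_iff.1 (Finset.mem_range.1 hm))

lemma continuous_pAlp (n : ℕ) : Continuous (pAlp n) := by
  unfold pAlp
  fun_prop

lemma integral_mul_pAlp {g : ℝ → ℝ} {a b : ℝ} (hg : IntervalIntegrable g volume a b) (n : ℕ) :
    ∫ x in a..b, g x * pAlp n x =
      ∑ i ∈ Finset.range (n + 1),
        (n.choose i : ℝ) * (poch ((i : ℝ) / 2 + 1) n / n.factorial) * (-1) ^ (n - i) *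
          ∫ x in a..b, g x * x ^ i := by
  simp only [← intervalIntegral.integral_const_mul]
  rw [← intervalIntegral.integral_finsetSum fun i _ =>
    (hg.mul_continuousOn (by fun_prop)).const_mul _]
  simp only [pAlp, Finset.mul_sum, mul_left_comm (g _)]

lemma exists_natDegree_le_eval_eq_poch_half_add_one (n : ℕ) :
    ∃ q : Polynomial ℝ, q.natDegree ≤ n ∧ ∀ t, q.eval t = poch (t / 2 + 1) n := by
  open Polynomial in
  refine ⟨(ascPochhammer ℝ n).comp (C (1 / 2) * X + C 1), ?_, fun t => ?_⟩
  · calc _ ≤ (ascPochhammer ℝ n).natDegree * (C (1 / 2 : ℝ) * X + C 1).natDegree :=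
          natDegree_comp_le
      _ ≤ n * 1 := Nat.mul_le_mul (ascPochhammer_natDegree ℝ n).le natDegree_linear_le
      _ = n := mul_one n
  · simp [poch, div_eq_inv_mul]

lemma integral_pAlp_mul_pow (n m : ℕ) :
    ∫ x in (0 : ℝ)..1, pAlp n x * x ^ m =
      (-1) ^ n * poch ((1 - (m : ℝ)) / 2) n / poch ((m : ℝ) + 1) (n + 1) := by
  obtain ⟨q, hq, eval_q⟩ := exists_natDegree_le_eval_eq_poch_half_add_one n
  have integral_monomial (i : ℕ) : ∫ x in (0 : ℝ)..1, x ^ m * x ^ i = 1 / ((m : ℝ) + 1 + i) := by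
    simp_rw [← pow_add, integral_pow]
    simp [add_right_comm]
  calc ∫ x in (0 : ℝ)..1, pAlp n x * x ^ m
      = ∫ x in (0 : ℝ)..1, x ^ m * pAlp n x := by simp only [mul_comm]
    _ = (∑ i ∈ Finset.range (n + 1),
          (-1) ^ (n - i) * (n.choose i : ℝ) * (q.eval (i : ℝ) / ((m : ℝ) + 1 + i))) /
            n.factorial := by
        rw [integral_mul_pAlp (intervalIntegrable_pow m), Finset.sum_div]
        refine Finset.sum_congr rfl fun i _ => ?_
        rw [integral_monomial, eval_q]
        ring
    _ = (-1) ^ n * poch ((1 - (m : ℝ)) / 2) n / poch ((m : ℝ) + 1) (n + 1) := by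
        rw [sum_alternating_choose_mul_eval_div hq fun i _ => by positivity, eval_q, ← poch,
          show -((m : ℝ) + 1) / 2 + 1 = (1 - m) / 2 by ring]
        field_simp

lemma integral_pAlp_mul_odd_pow {n j : ℕ} (hj : j < n) :
    ∫ x in (0 : ℝ)..1, pAlp n x * x ^ (2 * j + 1) = 0 := by
  rw [integral_pAlp_mul_pow,
    show (1 - ((2 * j + 1 : ℕ) : ℝ)) / 2 = -(j : ℝ) by push_cast; ring,
    poch_neg_natCast, Nat.choose_eq_zero_of_lt hj]
  simp

lemma integral_pAlp_mul_even_pow (n j : ℕ) :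
    ∫ x in (0 : ℝ)..1, pAlp n x * x ^ (2 * j) =
      (-1) ^ n * (poch (1 / 2) n / (n + 1).factorial) *
        ((2 * j).factorial * poch (1 / 2) j /
          (poch (-(n : ℝ) + 1 / 2) j * poch ((n : ℝ) + 2) (2 * j))) := by
  have reflection : poch (1 / 2 - j) n * poch (-(n : ℝ) + 1 / 2) j =
      poch (1 / 2) n * poch (1 / 2) j := by
    convert poch_sub_natCast_mul_poch (1 / 2) n j using 3 <;> ring
  have factorial_comm : ((2 * j).factorial : ℝ) * poch (2 * j + 1) (n + 1) =
      (n + 1).factorial * poch ((n : ℝ) + 2) (2 * j) := by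
    convert factorial_mul_poch_comm (2 * j) (n + 1) using 3 <;> push_cast <;> ring
  have reflected_ne_zero : poch (-(n : ℝ) + 1 / 2) j ≠ 0 := right_ne_zero_of_mul
    (reflection ▸ (mul_pos (poch_pos one_half_pos n) (poch_pos one_half_pos j)).ne')
  rw [integral_pAlp_mul_pow, Nat.cast_mul, Nat.cast_two,
    show (1 - 2 * (j : ℝ)) / 2 = 1 / 2 - j by ring,
    eq_div_of_mul_eq reflected_ne_zero reflection,
    eq_div_of_mul_eq (by positivity) ((mul_comm _ _).trans factorial_comm), div_div_eq_mul_div]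
  ring

lemma choose_two_mul_mul_poch_div_factorial (k j : ℕ) :
    (k.choose (2 * j) : ℝ) * (poch (j + 1) k / k.factorial) =
      poch (-(k : ℝ)) (2 * j) * poch (k + 1) j / ((2 * j).factorial * j.factorial) := by
  rw [poch_neg_natCast, (even_two_mul j).neg_one_pow, one_mul]
  field_simp
  linear_combination (k.choose (2 * j) : ℝ) * factorial_mul_poch_comm j k

theorem gram_pAlp_general {n k : ℕ} (hkn : k ≤ 2 * n) :
    ∫ x in (0 : ℝ)..1, pAlp n x * pAlp k x =
      (-1) ^ (n + k) * (poch (1 / 2) n / ((n + 1).factorial : ℝ)) *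
        ∑ j ∈ Finset.range (k / 2 + 1),
          (poch ((k : ℝ) + 1) j * poch (-(k : ℝ) / 2) j * poch (-((k : ℝ) - 1) / 2) j
              * poch (1 / 2) j) /
            (poch (-(n : ℝ) + 1 / 2) j * poch (((n : ℝ) + 2) / 2) j
              * poch (((n : ℝ) + 3) / 2) j * (j.factorial : ℝ)) := by
  rw [integral_mul_pAlp ((continuous_pAlp n).intervalIntegrable 0 1), sum_range_succ_eq_sum_even,
    Finset.mul_sum]
  · refine Finset.sum_congr rfl fun j hj => ?_
    have two_mul_le : 2 * j ≤ k := by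
      have := Finset.mem_range.1 hj
      omega
    have sign : (-1 : ℝ) ^ (k - 2 * j) = (-1) ^ k :=
      neg_one_pow_congr (by simp [Nat.even_sub two_mul_le])
    rw [integral_pAlp_mul_even_pow, sign, Nat.cast_mul, Nat.cast_two,
      mul_div_cancel_left₀ _ two_ne_zero, choose_two_mul_mul_poch_div_factorial,
      poch_two_mul (-(k : ℝ)), poch_two_mul ((n : ℝ) + 2),
      show (-(k : ℝ) + 1) / 2 = -((k : ℝ) - 1) / 2 by ring,
      show (n : ℝ) + 2 + 1 = n + 3 by ring, pow_add]
    field_simp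
  · intro j hj
    rw [integral_pAlp_mul_odd_pow (by omega), mul_zero]

/-- Gram matrix entries: for `k ≤ n`,
`∫₀¹ p_n p_k = (-1)^{n+k} ((1/2)_n/(n+1)!) ₄F₃`-type terminating sum. -/
theorem gram_pAlp (n k : ℕ) (hkn : k ≤ n) :
    ∫ x in (0 : ℝ)..1, pAlp n x * pAlp k x =
      (-1) ^ (n + k) * (poch (1 / 2) n / ((n + 1).factorial : ℝ)) *
        ∑ j ∈ Finset.range (k / 2 + 1),
          (poch ((k : ℝ) + 1) j * poch (-(k : ℝ) / 2) j * poch (-((k : ℝ) - 1) / 2) j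
              * poch (1 / 2) j) /
            (poch (-(n : ℝ) + 1 / 2) j * poch (((n : ℝ) + 2) / 2) j
              * poch (((n : ℝ) + 3) / 2) j * (j.factorial : ℝ)) := by
  exact gram_pAlp_general (by omega)
end
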